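/- Well-formedness of derived period addition: for every valid date D, every period p = (py, pm, pd), and every rounding mode r ∈ {↓, ↑}, the value D +r p is a valid date. -/

import Mathlib

/-- A value is either a date `(y, m, d)` (a triple of integers in the
Gregorian calendar) or the error element `⊥`. -/
inductive DValue : Type
  | date (y m d : ℤ) : DValue
  | bot : DValue
deriving DecidableEq

/-- `nb_days(y, m)`: the number of days of month `m` in year `y`
(meaningful for `1 ≤ m ≤ 12`). A year is leap iff it is divisible by 4
and not by 100, or divisible by 400. -/
def nbDays (y m : ℤ) : ℤ :=
  if m = 2 then (if (4 ∣ y ∧ ¬ (100 ∣ y)) ∨ 400 ∣ y then 29 else 28)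
  else if m = 4 ∨ m = 6 ∨ m = 9 ∨ m = 11 then 30
  else 31

theorem nbDays_bounds (y m : ℤ) : 28 ≤ nbDays y m ∧ nbDays y m ≤ 31 := by
  unfold nbDays; split_ifs <;> omega

/-- A date `(y, m, d)` is valid iff `1 ≤ m ≤ 12` and `1 ≤ d ≤ nb_days(y, m)`. -/
def ValidDate (y m d : ℤ) : Prop :=
  1 ≤ m ∧ m ≤ 12 ∧ 1 ≤ d ∧ d ≤ nbDays y m

/-- Year addition: `(y,m,d) +y n = (y+n,m,d)`; `⊥ +y n = ⊥`. -/
def DValue.addY : DValue → ℤ → DValue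
  | .date y m d, n => .date (y + n) m d
  | .bot, _ => .bot

/-- Month addition on a date `(y, m, d)` (with `⊥` for a month component
outside `[1,12]`):
`(y,m,d) +m n = (y,m+n,d)` if `1 ≤ m+n ≤ 12`,
`= (y+1,m,d) +m (n−12)` if `m+n > 12`, `= (y−1,m,d) +m (n+12)` if `m+n < 1`. -/
def addMonths (y m d n : ℤ) : DValue :=
  if _h : 1 ≤ m ∧ m ≤ 12 then
    if _h1 : 1 ≤ m + n ∧ m + n ≤ 12 then .date y (m + n) d
    else if _h2 : 12 < m + n then addMonths (y + 1) m d (n - 12)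
    else addMonths (y - 1) m d (n + 12)
  else .bot
termination_by (m + n - 12).toNat + (1 - (m + n)).toNat
decreasing_by all_goals omega

/-- Month addition on values: `⊥ +m n = ⊥`. -/
def DValue.addM : DValue → ℤ → DValue
  | .date y m d, n => addMonths y m d n
  | .bot, _ => .bot

/-- Day addition, following the rules:
for `(y,m,d)` with `1 ≤ d ≤ nb_days(y,m)`:
`(y,m,d) +d n = (y,m,d+n)` if `1 ≤ d+n ≤ nb_days(y,m)`;
`= ((y,m,1) +m 1) +d (n − (nb_days(y,m) − d) − 1)` if `d+n > nb_days(y,m)`;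
`= (y,m,1) +d (d−1+n)` if `d+n ≤ 0` and `d > 1`;
if `n+1 ≤ 0` then, letting `(y',m',d') = (y,m,1) +m (−1)`,
`(y,m,1) +d n = (y',m',1) +d (n + nb_days(y',m'))`.
If `d < 1` or `d > nb_days(y,m)` (or the month is out of range), the result is `⊥`. -/
def addDays (y m d n : ℤ) : DValue :=
  if _hm : 1 ≤ m ∧ m ≤ 12 then
    if _hd : 1 ≤ d ∧ d ≤ nbDays y m then
      if _h1 : 1 ≤ d + n ∧ d + n ≤ nbDays y m then .date y m (d + n)
      else if _h2 : nbDays y m < d + n then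
        match addMonths y m 1 1 with
        | .date y' m' _ => addDays y' m' 1 (n - (nbDays y m - d) - 1)
        | .bot => .bot
      else if _h3 : 1 < d then addDays y m 1 (d - 1 + n)
      else
        match _hprev : addMonths y m 1 (-1) with
        | .date y' m' _ => addDays y' m' 1 (n + nbDays y' m')
        | .bot => .bot
    else .bot
  else .bot
termination_by (if 0 ≤ n then n else 62 - n).toNat
decreasing_by
  · split_ifs <;> omega
  · split_ifs <;> omega
  · have h28 := nbDays_bounds y' m'
    split_ifs <;> omega

/-- Day addition on values: `⊥ +d n = ⊥`. -/
def DValue.addD : DValue → ℤ → DValue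
  | .date y m d, n => addDays y m d n
  | .bot, _ => .bot

/-- Rounding modes: down (`↓`), up (`↑`) and error (`⊥`). -/
inductive RMode : Type
  | down | up | err
deriving DecidableEq

/-- Rounding `rnd_r`: if `1 ≤ d ≤ nb_days(y,m)` then `rnd_r(y,m,d) = (y,m,d)`;
if `d > nb_days(y,m)` then `rnd_↓(y,m,d) = (y,m,nb_days(y,m))`,
`rnd_↑(y,m,d) = (y',m',1)` where `(y',m',d') = (y,m,d) +m 1`, and
`rnd_⊥(y,m,d) = ⊥`; if `d < 1` then `rnd_r(y,m,d) = ⊥`; `rnd_r(⊥) = ⊥`. -/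
def rnd (r : RMode) : DValue → DValue
  | .date y m d =>
    if 1 ≤ d ∧ d ≤ nbDays y m then .date y m d
    else if d < 1 then .bot
    else
      match r with
      | .down => .date y m (nbDays y m)
      | .up =>
        match addMonths y m d 1 with
        | .date y' m' _ => .date y' m' 1
        | .bot => .bot
      | .err => .bot
  | .bot => .bot

/-- A period `(py, pm, pd)`: a number of years, months and days. -/
structure Period : Type where
  py : ℤ
  pm : ℤ
  pd : ℤ
deriving DecidableEq

/-- Derived addition of a period with rounding mode `r`:
`e +r (py, pm, pd) = rnd_r((e +y py) +m pm) +d pd`. -/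
def addPeriod (r : RMode) (e : DValue) (p : Period) : DValue :=
  ((rnd r ((e.addY p.py).addM p.pm)).addD p.pd)

/-- Strict lexicographic order on dates. -/
def DateLt (y1 m1 d1 y2 m2 d2 : ℤ) : Prop :=
  y1 < y2 ∨ (y1 = y2 ∧ (m1 < m2 ∨ (m1 = m2 ∧ d1 < d2)))

/-- Large lexicographic order on dates. -/
def DateLe (y1 m1 d1 y2 m2 d2 : ℤ) : Prop :=
  y1 < y2 ∨ (y1 = y2 ∧ (m1 < m2 ∨ (m1 = m2 ∧ d1 ≤ d2)))

/-- Comparison lifted to values: it holds only between two dates. -/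
def DValue.lt : DValue → DValue → Prop
  | .date y1 m1 d1, .date y2 m2 d2 => DateLt y1 m1 d1 y2 m2 d2
  | _, _ => False

/-- Comparison lifted to values: it holds only between two dates. -/
def DValue.le : DValue → DValue → Prop
  | .date y1 m1 d1, .date y2 m2 d2 => DateLe y1 m1 d1 y2 m2 d2
  | _, _ => False

/-- A value is a valid date: it is not `⊥` and its components are valid. -/
def IsValidDate : DValue → Prop
  | .date y m d => ValidDate y m d
  | .bot => False

def yearOf : DValue → ℤ
  | .date y _ _ => y
  | .bot => 0

def monthOf : DValue → ℤ
  | .date _ m _ => m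
  | .bot => 0

def dayOf : DValue → ℤ
  | .date _ _ d => d
  | .bot => 0

/-- Date units: year, month, day. -/
inductive DUnit : Type
  | year | month | day
deriving DecidableEq

/-- Addition of `n` units to a value. -/
def addU : DUnit → DValue → ℤ → DValue
  | .year, v, n => v.addY n
  | .month, v, n => v.addM n
  | .day, v, n => v.addD n

/-- Componentwise addition of periods. -/
def Period.add (p q : Period) : Period :=
  ⟨p.py + q.py, p.pm + q.pm, p.pd + q.pd⟩

/-!
Year and month addition keep the month in range and the day positive; they can only push the day
past the end of its month, which is what rounding down or up repairs. Day addition then preserves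
validity because each of its recursive calls starts on the first day of some month, and every month
has a first day.
-/

/-- The values on which rounding down or up is meaningful: dates with a month in range and a
positive day, where the day may exceed the length of the month. -/
def IsRoundable : DValue → Prop
  | .date _ m d => 1 ≤ m ∧ m ≤ 12 ∧ 1 ≤ d
  | .bot => False

theorem one_le_nbDays (y m : ℤ) : 1 ≤ nbDays y m :=
  le_trans (by norm_num) (nbDays_bounds y m).1

theorem ValidDate.isRoundable {y m d : ℤ} (h : ValidDate y m d) : IsRoundable (.date y m d) :=
  ⟨h.1, h.2.1, h.2.2.1⟩

theorem IsRoundable.validDate_one {y m d : ℤ} (h : IsRoundable (.date y m d)) :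
    ValidDate y m 1 :=
  ⟨h.1, h.2.1, le_rfl, one_le_nbDays y m⟩

theorem IsRoundable.validDate_nbDays {y m d : ℤ} (h : IsRoundable (.date y m d)) :
    ValidDate y m (nbDays y m) :=
  ⟨h.1, h.2.1, one_le_nbDays y m, le_rfl⟩

theorem IsRoundable.isRoundable_addMonths {y m d : ℤ} (h : IsRoundable (.date y m d)) (n : ℤ) :
    IsRoundable (addMonths y m d n) := by
  fun_induction addMonths y m d n with
  | case1 _ _ _ month_in_range => exact ⟨month_in_range.1, month_in_range.2, h.2.2⟩
  | case2 _ _ _ _ _ ih => exact ih h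
  | case3 _ _ _ _ _ ih => exact ih h
  | case4 _ _ month_out_of_range => exact month_out_of_range ⟨h.1, h.2.1⟩

theorem IsRoundable.isRoundable_addY {v : DValue} (h : IsRoundable v) (n : ℤ) :
    IsRoundable (v.addY n) :=
  match v, h with
  | .date _ _ _, h => h

theorem IsRoundable.isRoundable_addM {v : DValue} (h : IsRoundable v) (n : ℤ) :
    IsRoundable (v.addM n) :=
  match v, h with
  | .date _ _ _, h => h.isRoundable_addMonths n

theorem IsRoundable.isValidDate_rnd {r : RMode} {v : DValue} (h : IsRoundable v)
    (hr : r = RMode.down ∨ r = RMode.up) : IsValidDate (rnd r v) := by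
  match v, h with
  | .date y m d, h =>
    simp only [rnd]
    split_ifs with day_in_month day_lt_one
    · exact ⟨h.1, h.2.1, day_in_month⟩
    · exact day_lt_one.not_ge h.2.2
    · rcases hr with rfl | rfl
      · exact h.validDate_nbDays
      · have next : IsRoundable (addMonths y m d 1) := h.isRoundable_addMonths 1
        match addMonths y m d 1, next with
        | .date _ _ _, next => exact next.validDate_one

theorem ValidDate.isRoundable_addMonths_one {y m d : ℤ} (h : ValidDate y m d) (n : ℤ) :
    IsRoundable (addMonths y m 1 n) :=
  h.isRoundable.validDate_one.isRoundable.isRoundable_addMonths n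

theorem ValidDate.isValidDate_addDays {y m d : ℤ} (h : ValidDate y m d) (n : ℤ) :
    IsValidDate (addDays y m d n) := by
  fun_induction addDays y m d n with
  | case1 _ _ _ _ _ _ day_in_month => exact ⟨h.1, h.2.1, day_in_month⟩
  | case2 _ _ _ _ _ _ _ _ _ _ _ next ih =>
    have roundable := h.isRoundable_addMonths_one 1
    rw [next] at roundable
    exact ih roundable.validDate_one
  | case3 _ _ _ _ _ _ _ _ next =>
    have roundable := h.isRoundable_addMonths_one 1
    rwa [next] at roundable
  | case4 _ _ _ _ _ _ _ _ _ ih => exact ih h.isRoundable.validDate_one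
  | case5 _ _ _ _ _ _ _ _ _ _ _ _ prev ih =>
    have roundable := h.isRoundable_addMonths_one (-1)
    rw [prev] at roundable
    exact ih roundable.validDate_one
  | case6 _ _ _ _ _ _ _ _ _ prev =>
    have roundable := h.isRoundable_addMonths_one (-1)
    rwa [prev] at roundable
  | case7 _ _ _ _ _ day_out_of_range => exact day_out_of_range h.2.2
  | case8 _ _ _ _ month_out_of_range => exact month_out_of_range ⟨h.1, h.2.1⟩

theorem IsValidDate.isValidDate_addD {v : DValue} (h : IsValidDate v) (n : ℤ) :
    IsValidDate (v.addD n) :=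
  match v, h with
  | .date _ _ _, h => ValidDate.isValidDate_addDays h n

theorem wellFormedness_addPeriod_general {r : RMode} {v : DValue} (h : IsRoundable v)
    (hr : r = RMode.down ∨ r = RMode.up) (p : Period) : IsValidDate (addPeriod r v p) := by
  have shifted : IsRoundable ((v.addY p.py).addM p.pm) :=
    (h.isRoundable_addY p.py).isRoundable_addM p.pm
  have rounded : IsValidDate (rnd r ((v.addY p.py).addM p.pm)) := shifted.isValidDate_rnd hr
  exact rounded.isValidDate_addD p.pd

/-- **Well-formedness of derived period addition**: for every valid date `D`,
every period `p = (py, pm, pd)`, and every rounding mode `r ∈ {↓, ↑}`, the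
value `D +r p` is a valid date. -/
theorem wellFormedness_addPeriod (y m d : ℤ) (p : Period) (r : RMode)
    (hr : r = RMode.down ∨ r = RMode.up) (h : ValidDate y m d) :
    IsValidDate (addPeriod r (DValue.date y m d) p) :=
  wellFormedness_addPeriod_general h.isRoundable hr p
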